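/- Suppose g₀ is a Lie subalgebra of e with g₀ ∩ a = 0 and g₀ + a = e (so e = g₀ ⊕ a as F-vector spaces). For every e-equivariant linear automorphism φ of a, the map ε(φ) : e → e defined by ε(φ)(x + m) = x + φ(m) for x ∈ g₀, m ∈ a is a Lie algebra automorphism of e satisfying ε(φ)(y) - y ∈ a for all y ∈ e and ε(φ)(m) = φ(m) for all m ∈ a; moreover ε(φ₁ ∘ φ₂) = ε(φ₁) ∘ ε(φ₂) for all such φ₁, φ₂. Hence the restriction map from the group of Lie algebra automorphisms of e inducing the identity on e/a to the group of e-equivariant automorphisms of a is a surjective group homomorphism admitting a group-homomorphism section. -/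

import Mathlib

/-- An `e`-equivariant automorphism of the ideal `a`: a bijective `F`-linear map
`φ : a → a` with `φ ⁅x, m⁆ = ⁅x, φ m⁆` for all `x ∈ e`, `m ∈ a`. -/
def IsEquivariantAut {F : Type*} [Field F] {e : Type*} [LieRing e] [LieAlgebra F e]
    (a : LieIdeal F e) (φ : a →ₗ[F] a) : Prop :=
  (∀ (x : e) (m : a), φ ⁅x, m⁆ = ⁅x, φ m⁆) ∧ Function.Bijective φ

/-!
The extension `ε φ` is conjugate to `id × φ` under `g₀ × a ≃ e`, so multiplicativity of `ε` and
bijectivity of `ε φ` are pure linear algebra. The Lie bracket enters only through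
`⁅x + m, y + n⁆ = ⁅x, y⁆ + (⁅x, n⁆ - ⁅y, m⁆)`, where `⁅m, n⁆` vanishes because `a` is abelian:
here `⁅x, y⁆` lies in `g₀`, where `ε φ` is the identity, while the other summand lies in `a` and is
built from the `e`-action, with which `φ` commutes.
-/

section Extension

variable {R M : Type*} [Ring R] [AddCommGroup M] [Module R M] {p q : Submodule R M}

theorem isCompl_of_exists_eq_add (hdisj : ∀ x ∈ p, x ∈ q → x = 0)
    (hspan : ∀ y, ∃ x ∈ p, ∃ m ∈ q, y = x + m) : IsCompl p q where
  disjoint := Submodule.disjoint_def.2 hdisj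
  codisjoint := Submodule.codisjoint_iff_exists_add_eq.2 fun y ↦
    let ⟨x, hx, m, hm, hy⟩ := hspan y
    ⟨x, m, hx, hm, hy.symm⟩

theorem exists_coe_add_coe_eq (h : Codisjoint p q) (y : M) :
    ∃ (x : p) (m : q), (x + m : M) = y :=
  Submodule.mem_sup'.1 (h.eq_top ▸ Submodule.mem_top)

/-- The paper's `ε` at the level of modules: an endomorphism `φ` of `q` extends to `M = p ⊕ q` by
the identity on `p`. It is built as the conjugate of `id × φ` so that `ε` is multiplicative by
construction. -/
noncomputable def extendEnd (h : IsCompl p q) : Module.End R q →* Module.End R M :=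
  ((p.prodEquivOfIsCompl q h).conjRingEquiv.toMonoidHom.comp
    (LinearMap.prodMapRingHom R p q).toMonoidHom).comp (MonoidHom.inr _ _)

theorem extendEnd_apply_add (h : IsCompl p q) (φ : Module.End R q) (x : p) (m : q) :
    extendEnd h φ (x + m) = x + φ m := by
  have hsymm : (p.prodEquivOfIsCompl q h).symm (x + m) = (x, m) :=
    (p.prodEquivOfIsCompl q h).symm_apply_apply (x, m)
  simp [extendEnd, hsymm, -map_add]

theorem extendEnd_apply_coe (h : IsCompl p q) (φ : Module.End R q) (m : q) :
    extendEnd h φ m = φ m := by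
  simpa using extendEnd_apply_add h φ 0 m

theorem eq_extendEnd (h : IsCompl p q) {φ : Module.End R q} {f : M → M}
    (hf : ∀ (x : p) (m : q), f (x + m) = x + φ m) : f = extendEnd h φ := by
  funext y
  obtain ⟨x, m, rfl⟩ := exists_coe_add_coe_eq h.codisjoint y
  rw [hf, extendEnd_apply_add]

theorem extendEnd_apply_sub_mem (h : IsCompl p q) (φ : Module.End R q) (y : M) :
    extendEnd h φ y - y ∈ q := by
  obtain ⟨x, m, rfl⟩ := exists_coe_add_coe_eq h.codisjoint y
  rw [extendEnd_apply_add, add_sub_add_left_eq_sub]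
  exact sub_mem (φ m).2 m.2

theorem extendEnd_bijective (h : IsCompl p q) {φ : Module.End R q} (hφ : Function.Bijective φ) :
    Function.Bijective (extendEnd h φ) :=
  (Module.End.isUnit_iff _).1 (((Module.End.isUnit_iff φ).2 hφ).map (extendEnd h))

end Extension

section LieExtension

variable {R L : Type*} [CommRing R] [LieRing L] [LieAlgebra R L] {a : LieIdeal R L}
  {g : LieSubalgebra R L} [IsLieAbelian a]

theorem add_lie_add_of_isLieAbelian (x y : L) (m n : a) :
    ⁅x + m, y + n⁆ = ⁅x, y⁆ + (⁅x, n⁆ - ⁅y, m⁆ : a) := by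
  have hmn : ⁅(m : L), (n : L)⁆ = 0 := congrArg Subtype.val (trivial_lie_zero a a m n)
  rw [add_lie, lie_add, lie_add, hmn, ← lie_skew (m : L) y, AddSubgroupClass.coe_sub,
    LieSubmodule.coe_bracket, LieSubmodule.coe_bracket]
  abel

theorem extendEnd_lie (h : IsCompl g.toSubmodule a.toSubmodule) (φ : a →ₗ⁅R,L⁆ a) (u v : L) :
    extendEnd h (φ : a →ₗ[R] a) ⁅u, v⁆ =
      ⁅extendEnd h (φ : a →ₗ[R] a) u, extendEnd h (φ : a →ₗ[R] a) v⁆ := by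
  obtain ⟨(x : g), (m : a), rfl⟩ := exists_coe_add_coe_eq h.codisjoint u
  obtain ⟨(y : g), (n : a), rfl⟩ := exists_coe_add_coe_eq h.codisjoint v
  calc
    extendEnd h (φ : a →ₗ[R] a) ⁅(x + m : L), (y + n : L)⁆
      = extendEnd h (φ : a →ₗ[R] a) (⁅(x : L), (y : L)⁆ + (⁅(x : L), n⁆ - ⁅(y : L), m⁆ : a)) := by
        rw [← add_lie_add_of_isLieAbelian (a := a)]
    _ = ⁅(x : L), (y : L)⁆ + (φ (⁅(x : L), n⁆ - ⁅(y : L), m⁆) : a) :=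
        extendEnd_apply_add h (φ : a →ₗ[R] a) ⟨_, g.lie_mem x.2 y.2⟩ _
    _ = ⁅(x : L), (y : L)⁆ + (⁅(x : L), φ n⁆ - ⁅(y : L), φ m⁆ : a) := by
        rw [map_sub, LieModuleHom.map_lie, LieModuleHom.map_lie]
    _ = ⁅(x + φ m : L), (y + φ n : L)⁆ := (add_lie_add_of_isLieAbelian _ _ _ _).symm
    _ = ⁅extendEnd h (φ : a →ₗ[R] a) (x + m), extendEnd h (φ : a →ₗ[R] a) (y + n)⁆ :=
        congrArg₂ Bracket.bracket (extendEnd_apply_add h _ x m).symm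
          (extendEnd_apply_add h _ y n).symm

/-- The paper's `ε(φ)` as a homomorphism of Lie algebras, defined for every equivariant
endomorphism `φ` of the abelian ideal `a`, invertible or not. -/
noncomputable def extendLieHom (h : IsCompl g.toSubmodule a.toSubmodule) (φ : a →ₗ⁅R,L⁆ a) :
    L →ₗ⁅R⁆ L where
  __ := extendEnd h (φ : a →ₗ[R] a)
  map_lie' {u v} := extendEnd_lie h φ u v

end LieExtension

/-- Automorphisms of a Lie module, as a property of linear endomorphisms. For a Lie ideal over a
field it unfolds to the same condition as `IsEquivariantAut`. -/
def IsLieModuleAut {R : Type*} (L : Type*) {M : Type*} [CommRing R] [LieRing L] [AddCommGroup M]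
    [Module R M] [LieRingModule L M] (φ : M →ₗ[R] M) : Prop :=
  (∀ (x : L) (m : M), φ ⁅x, m⁆ = ⁅x, φ m⁆) ∧ Function.Bijective φ

theorem IsLieModuleAut.comp {R L M : Type*} [CommRing R] [LieRing L] [AddCommGroup M] [Module R M]
    [LieRingModule L M] {φ ψ : M →ₗ[R] M} (hφ : IsLieModuleAut L φ) (hψ : IsLieModuleAut L ψ) :
    IsLieModuleAut L (φ ∘ₗ ψ) :=
  ⟨fun x m ↦ (congrArg φ (hψ.1 x m)).trans (hφ.1 x (ψ m)), hφ.2.comp hψ.2⟩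

theorem stmt17_general {R L : Type*} [CommRing R] [LieRing L] [LieAlgebra R L]
    {a : LieIdeal R L} [IsLieAbelian a] {g₀ : LieSubalgebra R L}
    (h : IsCompl g₀.toSubmodule a.toSubmodule) (E : (a →ₗ[R] a) → (L → L))
    (hE : ∀ φ : a →ₗ[R] a, IsLieModuleAut L φ →
      ∀ x ∈ g₀, ∀ m : a, E φ (x + (m : L)) = x + (φ m : L)) :
    (∀ φ : a →ₗ[R] a, IsLieModuleAut L φ →
      (∀ u v : L, E φ (u + v) = E φ u + E φ v) ∧
      (∀ (c : R) (u : L), E φ (c • u) = c • E φ u) ∧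
      (∀ u v : L, E φ ⁅u, v⁆ = ⁅E φ u, E φ v⁆) ∧
      Function.Bijective (E φ) ∧
      (∀ y : L, E φ y - y ∈ a) ∧
      (∀ m : a, E φ (m : L) = (φ m : L))) ∧
    (∀ φ₁ φ₂ : a →ₗ[R] a, IsLieModuleAut L φ₁ → IsLieModuleAut L φ₂ →
      ∀ u : L, E (φ₁ ∘ₗ φ₂) u = E φ₁ (E φ₂ u)) ∧
    (∀ φ : a →ₗ[R] a, IsLieModuleAut L φ →
      ∃ f : L →ₗ⁅R⁆ L, Function.Bijective f ∧ (∀ y, f y - y ∈ a) ∧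
        ∀ m : a, f (m : L) = (φ m : L)) := by
  have hext : ∀ φ, IsLieModuleAut L φ → E φ = extendEnd h φ := fun φ hφ ↦
    eq_extendEnd h fun x m ↦ hE φ hφ x x.2 m
  refine ⟨fun φ hφ ↦ ?_, fun φ₁ φ₂ hφ₁ hφ₂ u ↦ ?_, fun φ hφ ↦ ?_⟩
  · rw [hext φ hφ]
    exact ⟨map_add _, map_smul _, extendEnd_lie h ⟨φ, hφ.1 _ _⟩, extendEnd_bijective h hφ.2,
      extendEnd_apply_sub_mem h φ, extendEnd_apply_coe h φ⟩
  · rw [hext _ (hφ₁.comp hφ₂), hext φ₁ hφ₁, hext φ₂ hφ₂]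
    exact LinearMap.congr_fun (map_mul (extendEnd h) φ₁ φ₂) u
  · exact ⟨extendLieHom h ⟨φ, hφ.1 _ _⟩, extendEnd_bijective h hφ.2,
      extendEnd_apply_sub_mem h φ, extendEnd_apply_coe h φ⟩

/-- If `e = g₀ ⊕ a` with `g₀` a Lie subalgebra and `a` an abelian ideal, then for every
`e`-equivariant automorphism `φ` of `a` the map `ε φ : x + m ↦ x + φ m` is a Lie algebra
automorphism of `e` inducing the identity on `e/a` and restricting to `φ` on `a`, and
`ε` is multiplicative; hence the restriction map from the group of automorphisms of `e`
inducing the identity on `e/a` onto the group of `e`-equivariant automorphisms of `a` is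
a surjective group homomorphism admitting a group-homomorphism section. -/
theorem stmt17 {F : Type*} [Field F] [CharZero F]
    {e : Type*} [LieRing e] [LieAlgebra F e]
    (a : LieIdeal F e)
    (hab : ∀ m ∈ a, ∀ n ∈ a, ⁅m, n⁆ = (0 : e))
    (g₀ : LieSubalgebra F e)
    (hdisj : ∀ x : e, x ∈ g₀ → x ∈ a → x = 0)
    (hspan : ∀ y : e, ∃ x ∈ g₀, ∃ m ∈ a, y = x + m)
    (E : (a →ₗ[F] a) → (e → e))
    (hE : ∀ φ : a →ₗ[F] a, IsEquivariantAut a φ →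
      ∀ x ∈ g₀, ∀ m : a, E φ (x + (m : e)) = x + (φ m : e)) :
    (∀ φ : a →ₗ[F] a, IsEquivariantAut a φ →
      (∀ u v : e, E φ (u + v) = E φ u + E φ v) ∧
      (∀ (c : F) (u : e), E φ (c • u) = c • E φ u) ∧
      (∀ u v : e, E φ ⁅u, v⁆ = ⁅E φ u, E φ v⁆) ∧
      Function.Bijective (E φ) ∧
      (∀ y : e, E φ y - y ∈ a) ∧
      (∀ m : a, E φ (m : e) = (φ m : e))) ∧
    (∀ φ₁ φ₂ : a →ₗ[F] a, IsEquivariantAut a φ₁ → IsEquivariantAut a φ₂ →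
      ∀ u : e, E (φ₁ ∘ₗ φ₂) u = E φ₁ (E φ₂ u)) ∧
    (∀ φ : a →ₗ[F] a, IsEquivariantAut a φ →
      ∃ f : e →ₗ⁅F⁆ e, Function.Bijective f ∧ (∀ y, f y - y ∈ a) ∧
        ∀ m : a, f (m : e) = (φ m : e)) := by
  have : IsLieAbelian a := ⟨fun m n ↦ Subtype.ext (hab m m.2 n n.2)⟩
  exact stmt17_general (isCompl_of_exists_eq_add (p := g₀.toSubmodule) hdisj hspan) E hE
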